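/- Let X ⊆ ℂ be a locally compact subspace and let c > 0. Then there exists a function η ∈ C₀(X) with η(z) > 0 for all z ∈ X, and for every such η the function h(z) := e^{-c|z|²}·η(z) is a *-cyclic vector for M_z in C₀(X): q·h ∈ C₀(X) for every q ∈ Π(z,z̄), and the set {q·h : q ∈ Π(z,z̄)} is dense in C₀(X) with respect to the supremum norm. -/

import Mathlib

open MeasureTheory Filter

/-!
Let `W` be the closure in `C₀(ℂ)` of the functions `q(z, z̄) e^{-c|z|²}`. Expanding
`e^{-(b-c)|z|²}` in its Taylor series, which converges uniformly against `e^{-c|z|²}` as long as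
`|b - c| < c`, shows that `q(z, z̄) e^{-b|z|²} ∈ W` for such `b`, and a second expansion reaches
`b = 2c`. Hence `W` is closed under multiplication, and Stone–Weierstrass gives `W = C₀(ℂ)`.

For nonvanishing `η ∈ C₀(X)` and an injection `φ : X → ℂ`, every `f ∈ C₀(X)` is approximated by
functions `(w ∘ φ) η` with `w ∈ C₀(ℂ)`: regularise `f / η` to a bounded function, extend its
restriction to a large compact set by Tietze, and use that `η` is small off that set.
-/

open scoped ZeroAtInfty BoundedContinuousFunction Topology

section ZeroAtInfty

variable {X E : Type*} [TopologicalSpace X] [NormedAddCommGroup E]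

lemma hasSum_zeroAtInfty_apply {ι : Type*} {F : ι → C₀(X, E)} {f : C₀(X, E)}
    (h : HasSum F f) (x : X) : HasSum (fun i => F i x) (f x) := by
  let eval : C₀(X, E) →+ E := ⟨⟨fun g => g x, rfl⟩, fun _ _ => rfl⟩
  have eval_cont : Continuous eval :=
    (continuous_eval_const x).comp ZeroAtInftyContinuousMap.isometry_toBCF.continuous
  exact h.map eval eval_cont

lemma hasSum_zeroAtInfty_of_summable {ι : Type*} {F : ι → C₀(X, E)} {f : C₀(X, E)}
    (hF : Summable F) (h : ∀ x, HasSum (fun i => F i x) (f x)) : HasSum F f := by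
  convert hF.hasSum
  ext x
  exact (h x).unique (hasSum_zeroAtInfty_apply hF.hasSum x)

lemma zeroAtInfty_norm_apply_le (f : C₀(X, E)) (x : X) : ‖f x‖ ≤ ‖f‖ :=
  f.toBCF.norm_coe_le_norm x

lemma zeroAtInfty_norm_le {f : C₀(X, E)} {C : ℝ} (hC : 0 ≤ C) (h : ∀ x, ‖f x‖ ≤ C) : ‖f‖ ≤ C :=
  (BoundedContinuousFunction.norm_le (f := f.toBCF) hC).2 h

lemma exists_isCompact_norm_lt (f : C₀(X, E)) {ε : ℝ} (hε : 0 < ε) :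
    ∃ K : Set X, IsCompact K ∧ ∀ x ∉ K, ‖f x‖ < ε := by
  have small : ∀ᶠ x in cocompact X, ‖f x‖ < ε :=
    (tendsto_zero_iff_norm_tendsto_zero.1 (zero_at_infty f)).eventually_lt_const hε
  obtain ⟨K, hK, hKsmall⟩ := mem_cocompact.1 small
  exact ⟨K, hK, fun x hx => hKsmall hx⟩

theorem exists_zeroAtInfty_pos [R1Space X] [WeaklyLocallyCompactSpace X] [SigmaCompactSpace X] :
    ∃ η : C₀(X, ℝ), ∀ x, 0 < η x := by
  have bump (n : ℕ) := exists_continuous_one_zero_of_isCompact (isCompact_compactCovering X n)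
    isClosed_empty (Set.disjoint_empty _)
  choose f f_one _ f_supp f_mem using bump
  let F (n : ℕ) : C₀(X, ℝ) := (1 / 2 : ℝ) ^ n • ⟨f n, (f_supp n).is_zero_at_infty⟩
  have F_nonneg (n : ℕ) (x : X) : 0 ≤ F n x := mul_nonneg (by positivity) (f_mem n x).1
  have F_norm_le (n : ℕ) : ‖F n‖ ≤ (1 / 2) ^ n := zeroAtInfty_norm_le (by positivity) fun x => by
    rw [Real.norm_of_nonneg (F_nonneg n x)]
    exact mul_le_of_le_one_right (by positivity) (f_mem n x).2
  have F_sum : Summable F := .of_norm_bounded summable_geometric_two F_norm_le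
  refine ⟨∑' n, F n, fun x => ?_⟩
  obtain ⟨n, hn⟩ := exists_mem_compactCovering x
  have f_pos : 0 < f n x := by simp [f_one n hn]
  have F_pos : 0 < F n x := mul_pos (by positivity) f_pos
  have hsum := hasSum_zeroAtInfty_apply F_sum.hasSum x
  rw [← hsum.tsum_eq]
  exact hsum.summable.tsum_pos (F_nonneg · x) n F_pos

end ZeroAtInfty

section StoneWeierstrass

variable {X : Type*} [TopologicalSpace X] {𝕜 : Type*} [RCLike 𝕜]

/-- The extension of `f ∈ C₀(X)` by `0` at infinity, a continuous function on the one-point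
compactification. -/
noncomputable def onePointExtend [R1Space X] (f : C₀(X, 𝕜)) : C(OnePoint X, 𝕜) :=
  OnePoint.continuousMapMk f.toContinuousMap 0
    (coclosedCompact_eq_cocompact (X := X) ▸ zero_at_infty f)

/-- The unitization of a star subalgebra `A` of `C₀(X)`, realised on the one-point compactification:
the functions which differ from a constant by the extension of a member of `A`. -/
def onePointUnitization (A : NonUnitalStarSubalgebra 𝕜 C₀(X, 𝕜)) :
    StarSubalgebra 𝕜 C(OnePoint X, 𝕜) where
  carrier := {F | ∃ f ∈ A, ∀ x : X, F x = f x + F OnePoint.infty}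
  mul_mem' := by
    rintro F G ⟨f, hf, hF⟩ ⟨g, hg, hG⟩
    refine ⟨f * g + G OnePoint.infty • f + F OnePoint.infty • g,
      add_mem (add_mem (mul_mem hf hg) (SMulMemClass.smul_mem _ hf))
        (SMulMemClass.smul_mem _ hg), fun x => ?_⟩
    simp only [ContinuousMap.mul_apply, hF, hG, ZeroAtInftyContinuousMap.add_apply,
      ZeroAtInftyContinuousMap.mul_apply, ZeroAtInftyContinuousMap.smul_apply, smul_eq_mul]
    ring
  add_mem' := by
    rintro F G ⟨f, hf, hF⟩ ⟨g, hg, hG⟩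
    refine ⟨f + g, add_mem hf hg, fun x => ?_⟩
    simp only [ContinuousMap.add_apply, hF, hG, ZeroAtInftyContinuousMap.add_apply]
    ring
  algebraMap_mem' r := ⟨0, zero_mem A, fun x => by simp⟩
  star_mem' := by
    rintro F ⟨f, hf, hF⟩
    exact ⟨star f, star_mem hf, fun x => by simp [hF]⟩

lemma onePointExtend_mem [R1Space X] {A : NonUnitalStarSubalgebra 𝕜 C₀(X, 𝕜)} {f : C₀(X, 𝕜)}
    (hf : f ∈ A) : onePointExtend f ∈ onePointUnitization A :=
  ⟨f, hf, fun _ => (add_zero _).symm⟩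

lemma separatesPoints_onePointUnitization [R1Space X] {A : NonUnitalStarSubalgebra 𝕜 C₀(X, 𝕜)}
    (hsep : ∀ x y, x ≠ y → ∃ f ∈ A, f x ≠ f y) (hne : ∀ x, ∃ f ∈ A, f x ≠ 0) :
    (onePointUnitization A).SeparatesPoints := by
  suffices ∀ x y : OnePoint X, x ≠ y → ∃ f ∈ A, onePointExtend f x ≠ onePointExtend f y by
    intro x y hxy
    obtain ⟨f, hf, hfxy⟩ := this x y hxy
    exact ⟨_, ⟨_, onePointExtend_mem hf, rfl⟩, hfxy⟩
  intro x y hxy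
  induction x using OnePoint.rec <;> induction y using OnePoint.rec
  case infty.infty => exact absurd rfl hxy
  case infty.coe y => exact (hne y).imp fun f hf => ⟨hf.1, hf.2.symm⟩
  case coe.infty x => exact hne x
  case coe.coe x y => exact hsep x y (ne_of_apply_ne _ hxy)

theorem eq_top_of_separatesPoints_zeroAtInfty [T2Space X] [WeaklyLocallyCompactSpace X]
    {A : NonUnitalStarSubalgebra 𝕜 C₀(X, 𝕜)} (hA : IsClosed (A : Set C₀(X, 𝕜)))
    (hsep : ∀ x y, x ≠ y → ∃ f ∈ A, f x ≠ f y) (hne : ∀ x, ∃ f ∈ A, f x ≠ 0) : A = ⊤ := by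
  have dense := ContinuousMap.starSubalgebra_topologicalClosure_eq_top_of_separatesPoints _
    (separatesPoints_onePointUnitization hsep hne)
  refine NonUnitalStarAlgebra.eq_top_iff.2 fun f => hA.closure_subset ?_
  refine Metric.mem_closure_iff.2 fun ε hε => ?_
  have mem_closure :
      onePointExtend f ∈ closure (onePointUnitization A : Set C(OnePoint X, 𝕜)) := by
    rw [← StarSubalgebra.topologicalClosure_coe, dense]
    trivial
  obtain ⟨G, ⟨g, hg, hG⟩, hfG⟩ := Metric.mem_closure_iff.1 mem_closure (ε / 3) (by positivity)
  refine ⟨g, hg, ?_⟩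
  have near (x : OnePoint X) : ‖onePointExtend f x - G x‖ ≤ ε / 3 := by
    rw [← dist_eq_norm]
    exact (ContinuousMap.dist_apply_le_dist x).trans hfG.le
  have bound : ‖f - g‖ ≤ ε / 3 + ε / 3 := zeroAtInfty_norm_le (by positivity) fun x => by
    have split : (f - g) x = (onePointExtend f x - G x)
        - (onePointExtend f OnePoint.infty - G OnePoint.infty) := by
      rw [hG x]
      change f x - g x = f x - (g x + G OnePoint.infty) - (0 - G OnePoint.infty)
      ring
    rw [split]
    exact (norm_sub_le _ _).trans (add_le_add (near x) (near OnePoint.infty))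
  rw [dist_eq_norm]
  linarith

end StoneWeierstrass

section Pullback

variable {X Y : Type*} [TopologicalSpace X] [TopologicalSpace Y] {𝕜 : Type*} [RCLike 𝕜]

lemma exists_bounded_mul_near {η : C(X, 𝕜)} (hη : ∀ x, η x ≠ 0) (f : C₀(X, 𝕜)) {ε : ℝ}
    (hε : 0 < ε) : ∃ k : X →ᵇ 𝕜, ∀ x, ‖k x * η x - f x‖ < ε := by
  obtain ⟨K, hK, f_small⟩ := exists_isCompact_norm_lt f hε
  obtain ⟨m, hm, hηm⟩ : ∃ m, 0 < m ∧ ∀ x ∈ K, m ≤ ‖η x‖ :=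
    hK.exists_forall_le' (by fun_prop) fun x _ => norm_pos_iff.2 (hη x)
  have max_pos (x : X) : 0 < max ‖η x‖ m := lt_max_of_lt_right hm
  let u (x : X) : 𝕜 := star (η x) / (max ‖η x‖ m ^ 2 : ℝ)
  have u_cont : Continuous u := by
    refine Continuous.div (by fun_prop) (by fun_prop) fun x => ?_
    exact_mod_cast (pow_pos (max_pos x) 2).ne'
  have u_norm_le (x : X) : ‖u x‖ ≤ 1 / m := by
    rw [norm_div, norm_star, RCLike.norm_ofReal, abs_of_pos (pow_pos (max_pos x) 2),
      div_le_div_iff₀ (pow_pos (max_pos x) 2) hm, one_mul, sq]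
    gcongr
    exacts [le_max_left _ _, le_max_right _ _]
  have u_mul (x : X) : u x * η x = ((‖η x‖ / max ‖η x‖ m) ^ 2 : ℝ) := by
    rw [div_mul_eq_mul_div, RCLike.star_def, RCLike.conj_mul, div_pow]
    push_cast
    rfl
  refine ⟨f.toBCF * .ofNormedAddCommGroup u u_cont (1 / m) u_norm_le, fun x => ?_⟩
  change ‖f x * u x * η x - f x‖ < ε
  have factor : f x * u x * η x - f x = f x * (((‖η x‖ / max ‖η x‖ m) ^ 2 - 1 : ℝ) : 𝕜) := by
    rw [mul_assoc, u_mul]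
    push_cast
    ring
  rw [factor]
  by_cases hx : x ∈ K
  · rw [max_eq_left (hηm x hx), div_self (norm_ne_zero_iff.2 (hη x))]
    simpa using hε
  · rw [norm_mul, RCLike.norm_ofReal]
    have ratio_le : ‖η x‖ / max ‖η x‖ m ≤ 1 := div_le_one_of_le₀ (le_max_left _ _) (max_pos x).le
    have ratio_nonneg : 0 ≤ ‖η x‖ / max ‖η x‖ m := by positivity
    refine (mul_le_of_le_one_right (norm_nonneg _) (abs_le.2 ⟨?_, ?_⟩)).trans_lt (f_small x hx)
    · linarith [sq_nonneg (‖η x‖ / max ‖η x‖ m)]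
    · linarith [pow_le_one₀ ratio_nonneg ratio_le (n := 2)]

lemma exists_zeroAtInfty_extension {K : Type*} [TopologicalSpace K] [CompactSpace K]
    [T2Space Y] [WeaklyLocallyCompactSpace Y] {e : K → Y} (he : Continuous e)
    (he_inj : Function.Injective e) (k : C(K, 𝕜)) {B : ℝ} (hB : 0 < B) (hk : ∀ x, ‖k x‖ ≤ B) :
    ∃ w : C₀(Y, 𝕜), (∀ x, w (e x) = k x) ∧ ∀ y, ‖w y‖ ≤ B := by
  have closedEmbedding : Topology.IsClosedEmbedding fun x => (e x : OnePoint Y) :=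
    (OnePoint.continuous_coe.comp he).isClosedEmbedding (OnePoint.coe_injective.comp he_inj)
  have tietze := Metric.instTietzeExtensionClosedBall 𝕜 (0 : 𝕜) hB
  obtain ⟨F, F_mem, hF⟩ := ContinuousMap.exists_extension_forall_mem closedEmbedding k
    (t := Metric.closedBall 0 B) (by simpa using hk)
  obtain ⟨χ, χ_one, _, χ_supp, χ_mem⟩ := exists_continuous_one_zero_of_isCompact
    (isCompact_range he) isClosed_empty (Set.disjoint_empty _)
  let w : C(Y, 𝕜) := ⟨fun y => (χ y : 𝕜) * F y,
    (RCLike.continuous_ofReal.comp χ.continuous).mul (F.continuous.comp OnePoint.continuous_coe)⟩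
  have w_supp : HasCompactSupport w :=
    (χ_supp.comp_left (g := ((↑) : ℝ → 𝕜)) RCLike.ofReal_zero).mul_right
  refine ⟨⟨w, w_supp.is_zero_at_infty⟩, fun x => ?_, fun y => ?_⟩
  · change (χ (e x) : 𝕜) * F (e x) = k x
    rw [χ_one (Set.mem_range_self x), ← hF]
    simp
  · change ‖(χ y : 𝕜) * F y‖ ≤ B
    rw [norm_mul, RCLike.norm_ofReal, abs_of_nonneg (χ_mem y).1]
    exact (mul_le_of_le_one_left (norm_nonneg _) (χ_mem y).2).trans
      (by simpa using F_mem y)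

lemma tendsto_comp_mul_cocompact (w : C₀(Y, 𝕜)) (φ : X → Y) (η : C₀(X, 𝕜)) :
    Tendsto (fun x => w (φ x) * η x) (cocompact X) (𝓝 0) :=
  isBoundedUnder_le_mul_tendsto_zero
    (isBoundedUnder_of ⟨‖w‖, fun x => zeroAtInfty_norm_apply_le w (φ x)⟩) (zero_at_infty η)

theorem exists_zeroAtInfty_comp_mul_near [T2Space Y] [WeaklyLocallyCompactSpace Y] {φ : X → Y}
    (hφ : Continuous φ) (hφ_inj : Function.Injective φ) {η : C₀(X, 𝕜)} (hη : ∀ x, η x ≠ 0)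
    (f : C₀(X, 𝕜)) {ε : ℝ} (hε : 0 < ε) : ∃ w : C₀(Y, 𝕜), ∀ x, ‖w (φ x) * η x - f x‖ < ε := by
  obtain ⟨k, hk⟩ := exists_bounded_mul_near (η := η.toContinuousMap) hη f (half_pos hε)
  set B := ‖k‖ + 1
  have B_pos : 0 < B := by positivity
  have k_le (x : X) : ‖k x‖ ≤ B := (k.norm_coe_le_norm x).trans (lt_add_one _).le
  obtain ⟨K, hK, η_small⟩ := exists_isCompact_norm_lt η (show 0 < ε / (4 * B) by positivity)
  have : CompactSpace K := isCompact_iff_compactSpace.1 hK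
  obtain ⟨w, hw, w_le⟩ := exists_zeroAtInfty_extension (hφ.comp continuous_subtype_val)
    (hφ_inj.comp Subtype.val_injective) (k.toContinuousMap.restrict K) B_pos fun x => k_le x
  refine ⟨w, fun x => ?_⟩
  by_cases hx : x ∈ K
  · have w_eq : w (φ x) = k x := hw ⟨x, hx⟩
    rw [w_eq]
    exact (hk x).trans (half_lt_self hε)
  · have diff_le : ‖w (φ x) - k x‖ ≤ 2 * B := by
      linarith [norm_sub_le (w (φ x)) (k x), w_le (φ x), k_le x]
    calc ‖w (φ x) * η x - f x‖ = ‖(w (φ x) - k x) * η x + (k x * η x - f x)‖ := by ring_nf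
      _ ≤ ‖w (φ x) - k x‖ * ‖η x‖ + ‖k x * η x - f x‖ := by
        simpa only [norm_mul] using norm_add_le ((w (φ x) - k x) * η x) (k x * η x - f x)
      _ < 2 * B * (ε / (4 * B)) + ε / 2 := by
        refine add_lt_add_of_le_of_lt ?_ (hk x)
        gcongr
        exact (η_small x hx).le
      _ = ε := by field_simp; ring

end Pullback

section Gaussian

open MvPolynomial

lemma tendsto_norm_pow_mul_exp_neg_mul_sq_cocompact {E : Type*} [SeminormedAddCommGroup E]
    [ProperSpace E] {b : ℝ} (hb : 0 < b) (n : ℕ) :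
    Tendsto (fun z : E => ‖z‖ ^ n * Real.exp (-b * ‖z‖ ^ 2)) (cocompact E) (𝓝 0) := by
  simpa [Function.comp_def] using ((tendsto_rpow_abs_mul_exp_neg_mul_sq_cocompact hb n).mono_left
    atTop_le_cocompact).comp (tendsto_norm_cocompact_atTop (E := E))

/-- The function `z ↦ q(z, z̄)` on `ℂ` given by a polynomial `q` in two variables. -/
noncomputable def polyEval : MvPolynomial (Fin 2) ℂ →ₐ[ℂ] C(ℂ, ℂ) :=
  aeval ![.id ℂ, star (.id ℂ)]

lemma polyEval_apply (q : MvPolynomial (Fin 2) ℂ) (z : ℂ) :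
    polyEval q z = eval ![z, starRingEnd ℂ z] q := by
  induction q using MvPolynomial.induction_on with
  | C a => simp [polyEval]
  | add p q hp hq => simp [hp, hq]
  | mul_X p i hp =>
    rw [map_mul, ContinuousMap.mul_apply, hp, map_mul]
    fin_cases i <;> simp [polyEval]

lemma norm_polyEval_X (i : Fin 2) (z : ℂ) : ‖polyEval (X i) z‖ = ‖z‖ := by
  fin_cases i <;> simp [polyEval_apply]

lemma exists_polyEval_eq_star (q : MvPolynomial (Fin 2) ℂ) :
    ∃ p, polyEval p = star (polyEval q) := by
  induction q using MvPolynomial.induction_on with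
  | C a => exact ⟨C (star a), by ext z; simp [polyEval]⟩
  | add p q hp hq =>
    obtain ⟨p', hp'⟩ := hp
    obtain ⟨q', hq'⟩ := hq
    exact ⟨p' + q', by simp [hp', hq']⟩
  | mul_X p i hp =>
    obtain ⟨p', hp'⟩ := hp
    refine ⟨p' * X (Equiv.swap 0 1 i), ?_⟩
    rw [map_mul, map_mul, star_mul', hp']
    congr 1
    ext z
    fin_cases i <;> simp [polyEval_apply]

lemma tendsto_polyEval_mul_exp_cocompact (q : MvPolynomial (Fin 2) ℂ) {b : ℝ} (hb : 0 < b) :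
    Tendsto (fun z => polyEval q z * (Real.exp (-b * ‖z‖ ^ 2) : ℝ)) (cocompact ℂ) (𝓝 0) := by
  induction q using MvPolynomial.induction_on generalizing b with
  | C a =>
    rw [tendsto_zero_iff_norm_tendsto_zero]
    simpa [-Complex.ofReal_exp, polyEval_apply] using
      (tendsto_norm_pow_mul_exp_neg_mul_sq_cocompact (E := ℂ) hb 0).const_mul ‖a‖
  | add p q hp hq => simpa [add_mul] using (hp hb).add (hq hb)
  | mul_X p i hp =>
    have X_decay : Tendsto (fun z => polyEval (X i) z * (Real.exp (-(b / 2) * ‖z‖ ^ 2) : ℝ))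
        (cocompact ℂ) (𝓝 0) := by
      rw [tendsto_zero_iff_norm_tendsto_zero]
      simpa [-Complex.ofReal_exp, norm_polyEval_X] using
        tendsto_norm_pow_mul_exp_neg_mul_sq_cocompact (E := ℂ) (half_pos hb) 1
    have split (z : ℂ) : polyEval (p * X i) z * (Real.exp (-b * ‖z‖ ^ 2) : ℝ) =
        polyEval p z * (Real.exp (-(b / 2) * ‖z‖ ^ 2) : ℝ) *
          (polyEval (X i) z * (Real.exp (-(b / 2) * ‖z‖ ^ 2) : ℝ)) := by
      rw [mul_mul_mul_comm, ← Complex.ofReal_mul, ← Real.exp_add, map_mul,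
        ContinuousMap.mul_apply]
      ring_nf
    simpa only [split, mul_zero] using (hp (half_pos hb)).mul X_decay

/-- The linear map sending a polynomial `q` to the function `z ↦ q(z, z̄) e^{-c|z|²}` in
`C₀(ℂ)`. -/
noncomputable def polyGaussian {c : ℝ} (hc : 0 < c) : MvPolynomial (Fin 2) ℂ →ₗ[ℂ] C₀(ℂ, ℂ) where
  toFun q := ⟨⟨fun z => polyEval q z * (Real.exp (-c * ‖z‖ ^ 2) : ℝ), by fun_prop⟩,
    tendsto_polyEval_mul_exp_cocompact q hc⟩
  map_add' p q := by
    ext z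
    change polyEval (p + q) z * _ = polyEval p z * _ + polyEval q z * _
    rw [map_add, ContinuousMap.add_apply, add_mul]
  map_smul' a q := by
    ext z
    change polyEval (a • q) z * _ = a * (polyEval q z * _)
    rw [map_smul, ContinuousMap.smul_apply, smul_eq_mul, mul_assoc]

lemma polyGaussian_apply {c : ℝ} (hc : 0 < c) (q : MvPolynomial (Fin 2) ℂ) (z : ℂ) :
    polyGaussian hc q z = polyEval q z * (Real.exp (-c * ‖z‖ ^ 2) : ℝ) := rfl

lemma polyGaussian_mul {b c : ℝ} (hb : 0 < b) (hc : 0 < c) (p q : MvPolynomial (Fin 2) ℂ) :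
    polyGaussian hb p * polyGaussian hc q = polyGaussian (add_pos hb hc) (p * q) := by
  ext z
  rw [ZeroAtInftyContinuousMap.mul_apply]
  simp only [polyGaussian_apply]
  rw [mul_mul_mul_comm, ← Complex.ofReal_mul, ← Real.exp_add, map_mul, ContinuousMap.mul_apply]
  ring_nf

lemma polyGaussian_apply_eq_mul {b c : ℝ} (hb : 0 < b) (hc : 0 < c)
    (q : MvPolynomial (Fin 2) ℂ) (z : ℂ) :
    polyGaussian hc q z = (Real.exp (-(c - b) * ‖z‖ ^ 2) : ℝ) * polyGaussian hb q z := by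
  rw [polyGaussian_apply, polyGaussian_apply, mul_left_comm, ← Complex.ofReal_mul, ← Real.exp_add]
  ring_nf

/-- The polynomial `(-a z z̄)ᵐ / m! · q`, the `m`-th term of the expansion of `e^{-a|z|²} q`. -/
noncomputable def gaussianTaylorTerm (a : ℝ) (q : MvPolynomial (Fin 2) ℂ) (m : ℕ) :
    MvPolynomial (Fin 2) ℂ :=
  C ((-a : ℂ) ^ m / m.factorial) * (X 0 * X 1) ^ m * q

lemma polyGaussian_gaussianTaylorTerm_apply {b : ℝ} (hb : 0 < b) (a : ℝ)
    (q : MvPolynomial (Fin 2) ℂ) (m : ℕ) (z : ℂ) :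
    polyGaussian hb (gaussianTaylorTerm a q m) z =
      ((-a * ‖z‖ ^ 2) ^ m / m.factorial : ℝ) * polyGaussian hb q z := by
  simp only [polyGaussian_apply, polyEval_apply]
  simp only [gaussianTaylorTerm, map_mul, map_pow, eval_C, eval_X, Matrix.cons_val_zero,
    Matrix.cons_val_one, Complex.mul_conj']
  push_cast
  ring

lemma norm_polyGaussian_gaussianTaylorTerm_le {b d : ℝ} (hb : 0 < b) (hd : 0 < d) (hdb : d < b)
    (a : ℝ) (q : MvPolynomial (Fin 2) ℂ) (m : ℕ) :
    ‖polyGaussian hb (gaussianTaylorTerm a q m)‖ ≤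
      (|a| / d) ^ m * ‖polyGaussian (sub_pos.2 hdb) q‖ := by
  refine zeroAtInfty_norm_le (by positivity) fun z => ?_
  have weight_le : (d * ‖z‖ ^ 2) ^ m / m.factorial * Real.exp (-(b - (b - d)) * ‖z‖ ^ 2) ≤ 1 := by
    rw [sub_sub_cancel, neg_mul, Real.exp_neg, ← div_eq_mul_inv]
    exact div_le_one_of_le₀ (Real.pow_div_factorial_le_exp _ (by positivity) m)
      (Real.exp_nonneg _)
  calc ‖polyGaussian hb (gaussianTaylorTerm a q m) z‖
      = (|a| / d) ^ m *
          ((d * ‖z‖ ^ 2) ^ m / m.factorial * Real.exp (-(b - (b - d)) * ‖z‖ ^ 2)) *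
          ‖polyGaussian (sub_pos.2 hdb) q z‖ := by
        rw [polyGaussian_gaussianTaylorTerm_apply,
          polyGaussian_apply_eq_mul (sub_pos.2 hdb) hb]
        simp only [norm_mul, Complex.norm_real, Real.norm_eq_abs, Real.abs_exp, abs_div, abs_pow,
          abs_mul, abs_neg, abs_norm, Nat.abs_cast, mul_pow, div_pow]
        field_simp
    _ ≤ (|a| / d) ^ m * 1 * ‖polyGaussian (sub_pos.2 hdb) q‖ := by
        gcongr
        exact zeroAtInfty_norm_apply_le _ z
    _ = (|a| / d) ^ m * ‖polyGaussian (sub_pos.2 hdb) q‖ := by rw [mul_one]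

lemma hasSum_polyGaussian_gaussianTaylorTerm {b c : ℝ} (hb : 0 < b) (hc : 0 < c)
    (hbc : |c - b| < b) (q : MvPolynomial (Fin 2) ℂ) :
    HasSum (fun m => polyGaussian hb (gaussianTaylorTerm (c - b) q m)) (polyGaussian hc q) := by
  obtain ⟨d, hd, hdb⟩ := exists_between hbc
  have d_pos : 0 < d := (abs_nonneg _).trans_lt hd
  have summable : Summable fun m => polyGaussian hb (gaussianTaylorTerm (c - b) q m) :=
    .of_norm_bounded ((summable_geometric_of_lt_one (by positivity)
      ((div_lt_one d_pos).2 hd)).mul_right _)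
      (norm_polyGaussian_gaussianTaylorTerm_le hb d_pos hdb (c - b) q)
  refine hasSum_zeroAtInfty_of_summable summable fun z => ?_
  have exp_series := NormedSpace.expSeries_div_hasSum_exp (-(c - b) * ‖z‖ ^ 2)
  rw [← Real.exp_eq_exp_ℝ] at exp_series
  simpa only [polyGaussian_gaussianTaylorTerm_apply, polyGaussian_apply_eq_mul hb hc] using
    (Complex.hasSum_ofReal.2 exp_series).mul_right (polyGaussian hb q z)

lemma polyGaussian_mem_topologicalClosure_range {b c : ℝ} (hb : 0 < b) (hc : 0 < c)
    (hbc : |c - b| < b) (q : MvPolynomial (Fin 2) ℂ) :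
    polyGaussian hc q ∈ (LinearMap.range (polyGaussian hb)).topologicalClosure := by
  refine mem_closure_of_tendsto (hasSum_polyGaussian_gaussianTaylorTerm hb hc hbc q)
    (.of_forall fun s => ?_)
  exact Submodule.sum_mem _ fun m _ => LinearMap.mem_range_self _ _

lemma topologicalClosure_range_polyGaussian_le {b c : ℝ} (hb : 0 < b) (hc : 0 < c)
    (hbc : |c - b| < b) :
    (LinearMap.range (polyGaussian hc)).topologicalClosure ≤
      (LinearMap.range (polyGaussian hb)).topologicalClosure := by
  refine Submodule.topologicalClosure_minimal _ ?_ (Submodule.isClosed_topologicalClosure _)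
  rintro _ ⟨q, rfl⟩
  exact polyGaussian_mem_topologicalClosure_range hb hc hbc q

lemma polyGaussian_add_self_mem {c : ℝ} (hc : 0 < c) (q : MvPolynomial (Fin 2) ℂ) :
    polyGaussian (add_pos hc hc) q ∈ (LinearMap.range (polyGaussian hc)).topologicalClosure := by
  -- `2c` is just outside the range `|b - c| < c` of a single expansion, so go through `3c/2`.
  have mid_pos : 0 < 3 / 2 * c := by positivity
  have near_mid : |3 / 2 * c - c| < c := by rw [abs_lt]; constructor <;> linarith
  have mid_near : |c + c - 3 / 2 * c| < 3 / 2 * c := by rw [abs_lt]; constructor <;> linarith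
  exact topologicalClosure_range_polyGaussian_le hc mid_pos near_mid
    (polyGaussian_mem_topologicalClosure_range mid_pos _ mid_near q)

/-- The closure in `C₀(ℂ)` of the functions `q(z, z̄) e^{-c|z|²}`, as a star subalgebra. -/
noncomputable def gaussianAlgebra {c : ℝ} (hc : 0 < c) : NonUnitalStarSubalgebra ℂ C₀(ℂ, ℂ) where
  __ := (LinearMap.range (polyGaussian hc)).topologicalClosure
  mul_mem' {f g} hf hg := by
    refine isClosed_closure.closure_subset (map_mem_closure₂ continuous_mul hf hg ?_)
    rintro _ ⟨p, rfl⟩ _ ⟨q, rfl⟩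
    rw [polyGaussian_mul]
    exact polyGaussian_add_self_mem hc _
  star_mem' {f} hf := by
    refine map_mem_closure continuous_star hf ?_
    rintro _ ⟨q, rfl⟩
    obtain ⟨p, hp⟩ := exists_polyEval_eq_star q
    refine ⟨p, ?_⟩
    ext z
    rw [ZeroAtInftyContinuousMap.star_apply, polyGaussian_apply, polyGaussian_apply, hp, star_mul',
      ContinuousMap.star_apply, Complex.star_def, Complex.conj_ofReal]

lemma polyGaussian_mem_gaussianAlgebra {c : ℝ} (hc : 0 < c) (q : MvPolynomial (Fin 2) ℂ) :
    polyGaussian hc q ∈ gaussianAlgebra hc :=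
  subset_closure ⟨q, rfl⟩

theorem gaussianAlgebra_eq_top {c : ℝ} (hc : 0 < c) : gaussianAlgebra hc = ⊤ := by
  have exp_ne_zero (z : ℂ) : ((Real.exp (-c * ‖z‖ ^ 2) : ℝ) : ℂ) ≠ 0 :=
    Complex.ofReal_ne_zero.2 (Real.exp_ne_zero _)
  have one_apply (z : ℂ) : polyGaussian hc 1 z = (Real.exp (-c * ‖z‖ ^ 2) : ℝ) := by
    rw [polyGaussian_apply, map_one, ContinuousMap.one_apply, one_mul]
  have X_apply (z : ℂ) : polyGaussian hc (X 0) z = z * polyGaussian hc 1 z := by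
    simp [polyGaussian_apply, polyEval_apply]
  refine eq_top_of_separatesPoints_zeroAtInfty isClosed_closure (fun z w hzw => ?_) fun z =>
    ⟨_, polyGaussian_mem_gaussianAlgebra hc 1, one_apply z ▸ exp_ne_zero z⟩
  by_contra! agree
  have one_eq := agree _ (polyGaussian_mem_gaussianAlgebra hc 1)
  have X_eq := agree _ (polyGaussian_mem_gaussianAlgebra hc (X 0))
  rw [X_apply, X_apply, ← one_eq, one_apply] at X_eq
  exact hzw (mul_right_cancel₀ (exp_ne_zero z) X_eq)

theorem denseRange_polyGaussian {c : ℝ} (hc : 0 < c) : DenseRange (polyGaussian hc) := fun f =>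
  show f ∈ gaussianAlgebra hc from gaussianAlgebra_eq_top hc ▸ NonUnitalStarAlgebra.mem_top

end Gaussian

theorem exists_polyGaussian_comp_mul_near {X : Type*} [TopologicalSpace X] {c : ℝ} (hc : 0 < c)
    {φ : X → ℂ} (hφ : Continuous φ) (hφ_inj : Function.Injective φ) {η : C₀(X, ℂ)}
    (hη : ∀ x, η x ≠ 0) (f : C₀(X, ℂ)) {ε : ℝ} (hε : 0 < ε) :
    ∃ q, ∀ x, ‖polyGaussian hc q (φ x) * η x - f x‖ < ε := by
  obtain ⟨w, hw⟩ := exists_zeroAtInfty_comp_mul_near hφ hφ_inj hη f (half_pos hε)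
  obtain ⟨q, hq⟩ := (denseRange_polyGaussian hc).exists_dist_lt w
    (show 0 < ε / (2 * (‖η‖ + 1)) by positivity)
  refine ⟨q, fun x => ?_⟩
  have near : ‖polyGaussian hc q (φ x) - w (φ x)‖ ≤ ε / (2 * (‖η‖ + 1)) := by
    rw [dist_comm, dist_eq_norm] at hq
    exact (zeroAtInfty_norm_apply_le (polyGaussian hc q - w) (φ x)).trans hq.le
  have η_le : ‖η x‖ ≤ ‖η‖ + 1 := (zeroAtInfty_norm_apply_le η x).trans (lt_add_one _).le
  calc ‖polyGaussian hc q (φ x) * η x - f x‖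
      = ‖(polyGaussian hc q (φ x) - w (φ x)) * η x + (w (φ x) * η x - f x)‖ := by ring_nf
    _ ≤ ‖polyGaussian hc q (φ x) - w (φ x)‖ * ‖η x‖ + ‖w (φ x) * η x - f x‖ := by
      rw [← norm_mul]
      exact norm_add_le _ _
    _ < ε / (2 * (‖η‖ + 1)) * (‖η‖ + 1) + ε / 2 := by
      refine add_lt_add_of_le_of_lt ?_ (hw x)
      gcongr
    _ = ε := by field_simp; ring

theorem stmt_10_general {X : Type*} [TopologicalSpace X] [WeaklyLocallyCompactSpace X]
    [SigmaCompactSpace X] {φ : X → ℂ} (hφ : Continuous φ) (hφ_inj : Function.Injective φ) {c : ℝ}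
    (hc : 0 < c) :
    (∃ η : X → ℝ, Continuous η ∧ Tendsto η (cocompact X) (nhds 0) ∧ ∀ z, 0 < η z) ∧
    (∀ η : X → ℝ, Continuous η → Tendsto η (cocompact X) (nhds 0) → (∀ z, 0 < η z) →
      (∀ q : MvPolynomial (Fin 2) ℂ,
        Continuous (fun z =>
          MvPolynomial.eval ![φ z, (starRingEnd ℂ) (φ z)] q *
            ((Real.exp (-c * ‖φ z‖ ^ 2) * η z : ℝ) : ℂ)) ∧
        Tendsto (fun z =>
          MvPolynomial.eval ![φ z, (starRingEnd ℂ) (φ z)] q *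
            ((Real.exp (-c * ‖φ z‖ ^ 2) * η z : ℝ) : ℂ)) (cocompact X) (nhds 0)) ∧
      (∀ f : X → ℂ, Continuous f → Tendsto f (cocompact X) (nhds 0) → ∀ ε : ℝ, 0 < ε →
        ∃ q : MvPolynomial (Fin 2) ℂ, ∀ z : X,
          ‖MvPolynomial.eval ![φ z, (starRingEnd ℂ) (φ z)] q *
            ((Real.exp (-c * ‖φ z‖ ^ 2) * η z : ℝ) : ℂ) - f z‖ < ε)) := by
  have : T2Space X := .of_injective_continuous hφ_inj hφ
  have expand (η : X → ℝ) (q : MvPolynomial (Fin 2) ℂ) (z : X) :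
      MvPolynomial.eval ![φ z, (starRingEnd ℂ) (φ z)] q *
        ((Real.exp (-c * ‖φ z‖ ^ 2) * η z : ℝ) : ℂ) = polyGaussian hc q (φ z) * (η z : ℂ) := by
    rw [polyGaussian_apply, polyEval_apply, Complex.ofReal_mul, mul_assoc]
  refine ⟨?_, fun η η_cont η_zero η_pos => ?_⟩
  · obtain ⟨η, η_pos⟩ := exists_zeroAtInfty_pos (X := X)
    exact ⟨η, map_continuous η, zero_at_infty η, η_pos⟩
  have ηℂ_zero : Tendsto (fun z => (η z : ℂ)) (cocompact X) (𝓝 0) :=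
    (Complex.continuous_ofReal.tendsto' 0 0 Complex.ofReal_zero).comp η_zero
  let ηℂ : C₀(X, ℂ) := ⟨⟨fun z => (η z : ℂ), by fun_prop⟩, ηℂ_zero⟩
  have ηℂ_ne (z : X) : ηℂ z ≠ 0 := Complex.ofReal_ne_zero.2 (η_pos z).ne'
  simp only [expand]
  refine ⟨fun q => ⟨by fun_prop, tendsto_comp_mul_cocompact (polyGaussian hc q) φ ηℂ⟩,
    fun f f_cont f_zero ε hε => ?_⟩
  exact exists_polyGaussian_comp_mul_near hc hφ hφ_inj ηℂ_ne ⟨⟨f, f_cont⟩, f_zero⟩ hε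

/-- For a locally compact subspace `X ⊆ ℂ` and `c > 0` there is a strictly positive
`η ∈ C₀(X)`, and for every such `η` the function `h(z) = e^{-c|z|²}·η(z)` is a `*`-cyclic
vector for `M_z` in `C₀(X)`: `q·h ∈ C₀(X)` for all `q ∈ Π(z,z̄)` and `{q·h : q ∈ Π(z,z̄)}`
is dense in `C₀(X)` for the sup norm. -/
theorem stmt_10 (X : Set ℂ) [LocallyCompactSpace X] (c : ℝ) (hc : 0 < c) :
    (∃ η : X → ℝ, Continuous η ∧ Tendsto η (cocompact X) (nhds 0) ∧ ∀ z, 0 < η z) ∧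
    (∀ η : X → ℝ, Continuous η → Tendsto η (cocompact X) (nhds 0) → (∀ z, 0 < η z) →
      (∀ q : MvPolynomial (Fin 2) ℂ,
        Continuous (fun z : X =>
          MvPolynomial.eval ![(z : ℂ), (starRingEnd ℂ) (z : ℂ)] q *
            ((Real.exp (-c * ‖(z : ℂ)‖ ^ 2) * η z : ℝ) : ℂ)) ∧
        Tendsto (fun z : X =>
          MvPolynomial.eval ![(z : ℂ), (starRingEnd ℂ) (z : ℂ)] q *
            ((Real.exp (-c * ‖(z : ℂ)‖ ^ 2) * η z : ℝ) : ℂ)) (cocompact X) (nhds 0)) ∧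
      (∀ f : X → ℂ, Continuous f → Tendsto f (cocompact X) (nhds 0) → ∀ ε : ℝ, 0 < ε →
        ∃ q : MvPolynomial (Fin 2) ℂ, ∀ z : X,
          ‖MvPolynomial.eval ![(z : ℂ), (starRingEnd ℂ) (z : ℂ)] q *
            ((Real.exp (-c * ‖(z : ℂ)‖ ^ 2) * η z : ℝ) : ℂ) - f z‖ < ε)) :=
  stmt_10_general continuous_subtype_val Subtype.val_injective hc
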